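/- arXiv:2603.19463 — 5 statements merged into one kernel-verified Lean document; each statement's English description precedes it below -/
import Mathlib

section
/- Let v ∈ C²(H) and define its cylindrical approximation v^d(x) := v(P_d x), so that Dv^d(x) = P_d Dv(P_d x) and D²v^d(x) = P_d ∘ D²v(P_d x) ∘ P_d. Then v^d → v in the compact-open topology of C²(H) generated by the seminorms 𝐏^{COCO}: for all compact sets K, K' ⊆ H and every ε > 0 there exists d̄ ∈ ℕ such that for all d ≥ d̄: sup_{x∈K} |v(x) − v(P_d x)| < ε, sup_{x∈K} ‖Dv(x) − P_d Dv(P_d x)‖ < ε, and sup_{x∈K, h∈K'} ‖D²v(x)h − P_d D²v(P_d x) P_d h‖ < ε. -/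
open Filter Topology
open scoped RealInnerProductSpace

/-!
For a continuous limit, locally uniform convergence is the same as continuous convergence
(`F n y → f x` as `n → ∞` and `y → x` jointly), and so is stable under composition. The projections
`P d` converge pointwise to the identity, hence by Banach–Steinhaus locally uniformly. Therefore
`v ∘ P d`, `P d ∘ ∇v ∘ P d` and `(x, h) ↦ P d (D²v (P d x) (P d h))` converge locally uniformly to
the continuous maps `v`, `∇v` and `(x, h) ↦ D²v x h`. The Hessian has to be treated as a map on
`H × H`: already for `v = ‖·‖² / 2` it does not converge in operator norm when `H` is
infinite-dimensional.
-/

section LocallyUniformConvergence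

open scoped Uniformity

variable {ι α β γ : Type*} [TopologicalSpace α] [UniformSpace β] [UniformSpace γ] {p : Filter ι}

theorem tendstoLocallyUniformly_iff_tendsto_prod_nhds {F : ι → α → β} {f : α → β}
    (hf : Continuous f) :
    TendstoLocallyUniformly F f p ↔
      ∀ x, Tendsto (fun y : ι × α => F y.1 y.2) (p ×ˢ 𝓝 x) (𝓝 (f x)) := by
  rw [tendstoLocallyUniformly_iff_forall_tendsto]
  refine forall_congr' fun x => ?_
  have hfx : Tendsto (fun y : ι × α => f y.2) (p ×ˢ 𝓝 x) (𝓝 (f x)) :=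
    (hf.tendsto x).comp tendsto_snd
  exact ⟨fun h => (Uniform.tendsto_congr h).1 hfx,
    fun h => (hfx.prodMk_nhds h).mono_right (nhds_le_uniformity _)⟩

theorem tendstoLocallyUniformly_comp {F : ι → α → β} {f : α → β} {G : ι → β → γ} {g : β → γ}
    (hG : TendstoLocallyUniformly G g p) (hF : TendstoLocallyUniformly F f p)
    (hg : Continuous g) (hf : Continuous f) :
    TendstoLocallyUniformly (fun n => G n ∘ F n) (g ∘ f) p := by
  rw [tendstoLocallyUniformly_iff_tendsto_prod_nhds hg] at hG
  rw [tendstoLocallyUniformly_iff_tendsto_prod_nhds hf] at hF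
  rw [tendstoLocallyUniformly_iff_tendsto_prod_nhds (hg.comp hf)]
  exact fun x => (hG (f x)).comp (tendsto_fst.prodMk (hF x))

theorem tendstoLocallyUniformly_const {f : α → β} :
    TendstoLocallyUniformly (fun _ : ι => f) f p :=
  fun _ hu _ => ⟨Set.univ, univ_mem, .of_forall fun _ _ _ => refl_mem_uniformity hu⟩

theorem tendstoLocallyUniformly_comp_comp_of_tendsto_id {P : ι → β → β} {Q : ι → γ → γ} {g : β → γ}
    (hQ : TendstoLocallyUniformly Q id p) (hP : TendstoLocallyUniformly P id p)
    (hg : Continuous g) :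
    TendstoLocallyUniformly (fun n => Q n ∘ g ∘ P n) g p :=
  tendstoLocallyUniformly_comp hQ
    (tendstoLocallyUniformly_comp tendstoLocallyUniformly_const hP hg continuous_id)
    continuous_id hg

theorem tendstoLocallyUniformly_of_equicontinuous {F : ι → α → β} {f : α → β}
    (hF : Equicontinuous F) (h : ∀ x, Tendsto (fun n => F n x) p (𝓝 (f x))) :
    TendstoLocallyUniformly F f p := by
  obtain rfl | hp := p.eq_or_neBot
  · exact fun u _ x => ⟨Set.univ, univ_mem, eventually_bot⟩
  have hf : Continuous f := (tendsto_pi_nhds.2 h).continuous_of_equicontinuous hF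
  refine (tendstoLocallyUniformly_iff_tendsto_prod_nhds hf).2 fun x => ?_
  have hclose : Tendsto (fun y : ι × α => (F y.1 x, F y.1 y.2)) (p ×ˢ 𝓝 x) (𝓤 β) :=
    fun u hu => tendsto_snd.eventually (hF x u hu) |>.mono fun y hy => hy y.1
  exact (Uniform.tendsto_congr hclose).1 ((h x).comp tendsto_fst)

theorem eventually_forall_norm_sub_lt_of_isCompact {E : Type*} [SeminormedAddCommGroup E]
    {F : ι → α → E} {f : α → E} (h : TendstoLocallyUniformly F f p) {K : Set α}
    (hK : IsCompact K) {ε : ℝ} (hε : 0 < ε) :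
    ∀ᶠ n in p, ∀ x ∈ K, ‖f x - F n x‖ < ε := by
  have hKunif : TendstoUniformlyOn F f p K :=
    (tendstoLocallyUniformlyOn_iff_tendstoUniformlyOn_of_compact hK).1 h.tendstoLocallyUniformlyOn
  simpa only [dist_eq_norm] using Metric.tendstoUniformlyOn_iff.1 hKunif ε hε

end LocallyUniformConvergence

theorem tendstoLocallyUniformly_clm_of_tendsto {𝕜 𝕜' E F : Type*}
    [NontriviallyNormedField 𝕜] [NontriviallyNormedField 𝕜'] {σ : 𝕜 →+* 𝕜'} [RingHomIsometric σ]
    [AddCommGroup E] [Module 𝕜 E] [UniformSpace E] [IsUniformAddGroup E] [ContinuousSMul 𝕜 E]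
    [BarrelledSpace 𝕜 E] [AddCommGroup F] [Module 𝕜' F] [UniformSpace F] [IsUniformAddGroup F]
    [ContinuousSMul 𝕜' F] [PolynormableSpace 𝕜' F]
    {T : ℕ → E →SL[σ] F} {A : E → F} (h : ∀ x, Tendsto (fun n => T n x) atTop (𝓝 (A x))) :
    TendstoLocallyUniformly (fun n => ⇑(T n)) A atTop :=
  tendstoLocallyUniformly_of_equicontinuous
    (PolynormableSpace.banach_steinhaus fun x => (h x).isVonNBounded_range 𝕜').equicontinuous h

section Orthonormal

variable {𝕜 E : Type*} [RCLike 𝕜] [NormedAddCommGroup E] [InnerProductSpace 𝕜 E] [CompleteSpace E]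

theorem hasSum_inner_smul_of_dense_span {ι : Type*} {e : ι → E} (he : Orthonormal 𝕜 e)
    (hdense : Dense (Submodule.span 𝕜 (Set.range e) : Set E)) (x : E) :
    HasSum (fun i => inner 𝕜 (e i) x • e i) x := by
  have htop : ⊤ ≤ (Submodule.span 𝕜 (Set.range e)).topologicalClosure :=
    (Submodule.dense_iff_topologicalClosure_eq_top.1 hdense).ge
  simpa only [HilbertBasis.repr_apply_apply, HilbertBasis.coe_mk] using
    (HilbertBasis.mk he htop).hasSum_repr x

theorem tendstoLocallyUniformly_sum_inner_smul {e : ℕ → E} (he : Orthonormal 𝕜 e)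
    (hdense : Dense (Submodule.span 𝕜 (Set.range e) : Set E)) :
    TendstoLocallyUniformly (fun d x => ∑ i ∈ Finset.range d, inner 𝕜 (e i) x • e i) id atTop := by
  let S (d : ℕ) : E →L[𝕜] E := ∑ i ∈ Finset.range d, InnerProductSpace.rankOne 𝕜 (e i) (e i)
  have hS (d : ℕ) : ⇑(S d) = fun x => ∑ i ∈ Finset.range d, inner 𝕜 (e i) x • e i := by
    ext x
    simp only [S, sum_apply, InnerProductSpace.rankOne_apply]
  simpa only [hS] using tendstoLocallyUniformly_clm_of_tendsto (T := S) (A := id) fun x => by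
    simpa only [hS, id] using (hasSum_inner_smul_of_dense_span he hdense x).tendsto_sum_nat

end Orthonormal

section Gradient

variable {H : Type*} [NormedAddCommGroup H] [InnerProductSpace ℝ H] [CompleteSpace H]

theorem contDiff_gradient {v : H → ℝ} {m n : WithTop ℕ∞} (hv : ContDiff ℝ n v) (hmn : m + 1 ≤ n) :
    ContDiff ℝ m (gradient v) :=
  (InnerProductSpace.toDual ℝ H).symm.contDiff.comp (hv.fderiv_right hmn)

theorem cylindrical_approximation_tendsto_COCO_general {ι : Type*} {l : Filter ι} {P : ι → H → H}
    (hP : TendstoLocallyUniformly P id l) {v : H → ℝ} (hv : ContDiff ℝ 2 v)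
    {K K' : Set H} (hK : IsCompact K) (hK' : IsCompact K') {ε : ℝ} (hε : 0 < ε) :
    ∀ᶠ d in l,
      (∀ x ∈ K, |v x - v (P d x)| < ε) ∧
      (∀ x ∈ K, ‖gradient v x - P d (gradient v (P d x))‖ < ε) ∧
      (∀ x ∈ K, ∀ h ∈ K',
        ‖fderiv ℝ (gradient v) x h - P d (fderiv ℝ (gradient v) (P d x) (P d h))‖ < ε) := by
  have hgrad : ContDiff ℝ 1 (gradient v) := contDiff_gradient hv (by norm_num)
  have hhess : Continuous fun z : H × H => fderiv ℝ (gradient v) z.1 z.2 :=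
    hgrad.continuous_fderiv_apply (by norm_num)
  have hPP : TendstoLocallyUniformly (fun d (z : H × H) => (P d z.1, P d z.2)) id l :=
    (hP.comp Prod.fst continuous_fst).prodMk (hP.comp Prod.snd continuous_snd)
  have hval := tendstoLocallyUniformly_comp_comp_of_tendsto_id
    tendstoLocallyUniformly_const hP hv.continuous
  have hgradP := tendstoLocallyUniformly_comp_comp_of_tendsto_id hP hP hgrad.continuous
  have hhessP := tendstoLocallyUniformly_comp_comp_of_tendsto_id hP hPP hhess
  filter_upwards [eventually_forall_norm_sub_lt_of_isCompact hval hK hε,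
    eventually_forall_norm_sub_lt_of_isCompact hgradP hK hε,
    eventually_forall_norm_sub_lt_of_isCompact hhessP (hK.prod hK') hε] with d hvald hgradd hhessd
  exact ⟨hvald, hgradd, fun x hx h hh => hhessd (x, h) ⟨hx, hh⟩⟩

end Gradient

/-- the cylindrical approximations `v^d (x) = v (P d x)` of a function `v ∈ C²(H)`
converge to `v` in the compact-open topology of `C²(H)` generated by the seminorms `𝐏^{COCO}`:
uniformly on compacts for the function values and the gradients, and uniformly on
`K × K'` for the Hessians applied to vectors `h ∈ K'`. -/
theorem cylindrical_approximation_tendsto_COCO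
    {H : Type*} [NormedAddCommGroup H] [InnerProductSpace ℝ H] [CompleteSpace H]
    (e : ℕ → H) (he : Orthonormal ℝ e)
    (htot : Dense ((Submodule.span ℝ (Set.range e) : Submodule ℝ H) : Set H))
    (P : ℕ → H → H)
    (hP : ∀ (d : ℕ) (x : H), P d x = ∑ i ∈ Finset.range d, ⟪e i, x⟫ • e i)
    (v : H → ℝ) (hv : ContDiff ℝ 2 v)
    (K K' : Set H) (hK : IsCompact K) (hK' : IsCompact K')
    (ε : ℝ) (hε : 0 < ε) :
    ∃ D : ℕ, ∀ d ≥ D,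
      (∀ x ∈ K, |v x - v (P d x)| < ε) ∧
      (∀ x ∈ K, ‖gradient v x - P d (gradient v (P d x))‖ < ε) ∧
      (∀ x ∈ K, ∀ h ∈ K',
        ‖fderiv ℝ (gradient v) x h - P d (fderiv ℝ (gradient v) (P d x) (P d h))‖ < ε) := by
  obtain rfl : P = fun d x => ∑ i ∈ Finset.range d, ⟪e i, x⟫ • e i := funext₂ hP
  exact eventually_atTop.1 <| cylindrical_approximation_tendsto_COCO_general
    (tendstoLocallyUniformly_sum_inner_smul he htot) hv hK hK' hε
end

section
/- Let w, q ≥ 1, let v ∈ C²_{w,q}(H), and let μ, μ' be Borel probability measures on H with ‖μ‖_q < ∞ and ‖μ'‖_w < ∞. Then the cylindrical approximations v^d(x) := v(P_d x) converge to v in the weighted Sobolev-type norm: as d → ∞, ∫_H |v(x) − v(P_d x)|^w μ(dx) → 0, ∫_H ‖Dv(x) − P_d Dv(P_d x)‖^w μ(dx) → 0, and ∫_{H×H} ‖D²v(x)h − P_d D²v(P_d x) P_d h‖^w μ(dx) μ'(dh) → 0. -/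
open Filter Topology MeasureTheory
open scoped RealInnerProductSpace ENNReal

/-!
All three integrals have the form `∫ ‖f x - Q d (f (R d x))‖ ^ w`, where `f` is continuous, `R d`
converges pointwise to the identity and `Q d` is a sequence of linear contractions converging
strongly to the identity: `f` is `v`, `Dv`, or `(x, h) ↦ D²v(x) h` on `H × H`. Since `Q d` is a
contraction and `R d` does not increase norms, the growth bound on `f` also bounds
`Q d ∘ f ∘ R d`, and dominated convergence applies.
-/

section Contraction

variable {ι 𝕜 E : Type*} [NontriviallyNormedField 𝕜] [SeminormedAddCommGroup E] [NormedSpace 𝕜 E]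
  {l : Filter ι} {Q : ι → E →L[𝕜] E}

theorem norm_apply_le_of_opNorm_le_one {T : E →L[𝕜] E} (hT : ‖T‖ ≤ 1) (x : E) : ‖T x‖ ≤ ‖x‖ := by
  simpa using T.le_of_opNorm_le hT x

theorem tendsto_apply_of_opNorm_le_one (hQ : ∀ i, ‖Q i‖ ≤ 1)
    (hQ_lim : ∀ x, Tendsto (fun i => Q i x) l (𝓝 x)) {y : ι → E} {x : E}
    (hy : Tendsto y l (𝓝 x)) : Tendsto (fun i => Q i (y i)) l (𝓝 x) := by
  have h_diff : Tendsto (fun i => Q i (y i - x)) l (𝓝 0) :=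
    squeeze_zero_norm (fun i => norm_apply_le_of_opNorm_le_one (hQ i) _)
      (tendsto_iff_norm_sub_tendsto_zero.mp hy)
  simpa using h_diff.add (hQ_lim x)

end Contraction

section DominatedConvergence

theorem norm_sub_rpow_le {E : Type*} [SeminormedAddCommGroup E] {w M : ℝ} (hw : 0 ≤ w) {a b : E}
    (ha : ‖a‖ ^ w ≤ M) (hb : ‖b‖ ^ w ≤ M) : ‖a - b‖ ^ w ≤ 2 ^ w * M := by
  have h_max : max ‖a‖ ‖b‖ ^ w ≤ M := by
    rcases max_choice ‖a‖ ‖b‖ with h | h <;> rwa [h]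
  calc ‖a - b‖ ^ w ≤ (2 * max ‖a‖ ‖b‖) ^ w := by
        gcongr
        linarith [norm_sub_le a b, le_max_left ‖a‖ ‖b‖, le_max_right ‖a‖ ‖b‖]
    _ = 2 ^ w * max ‖a‖ ‖b‖ ^ w := Real.mul_rpow zero_le_two (by positivity)
    _ ≤ 2 ^ w * M := by gcongr

theorem tendsto_lintegral_norm_sub_rpow_of_dominated {ι X E : Type*} [MeasurableSpace X]
    {m : Measure X} [SeminormedAddCommGroup E] {l : Filter ι} [l.IsCountablyGenerated]
    {w : ℝ} (hw : 0 < w) {f : X → E} {F : ι → X → E} {G : X → ℝ}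
    (hf : AEStronglyMeasurable f m) (hF : ∀ᶠ i in l, AEStronglyMeasurable (F i) m)
    (hf_le : ∀ᵐ x ∂m, ‖f x‖ ^ w ≤ G x) (hF_le : ∀ᶠ i in l, ∀ᵐ x ∂m, ‖F i x‖ ^ w ≤ G x)
    (hG : Integrable G m) (hlim : ∀ᵐ x ∂m, Tendsto (fun i => F i x) l (𝓝 (f x))) :
    Tendsto (fun i => ∫⁻ x, ENNReal.ofReal (‖f x - F i x‖ ^ w) ∂m) l (𝓝 0) := by
  rw [← lintegral_zero (μ := m)]
  refine tendsto_lintegral_filter_of_dominated_convergence'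
    (fun x => ENNReal.ofReal (2 ^ w * G x)) ?_ ?_ (hG.const_mul _).lintegral_lt_top.ne ?_
  · filter_upwards [hF] with i hFi
    exact ((hf.sub hFi).norm.aemeasurable.pow_const w).ennreal_ofReal
  · filter_upwards [hF_le] with i hFi
    filter_upwards [hf_le, hFi] with x hfx hFx
    exact ENNReal.ofReal_le_ofReal (norm_sub_rpow_le hw.le hfx hFx)
  · filter_upwards [hlim] with x hx
    have h_norm : Tendsto (fun i => ‖f x - F i x‖) l (𝓝 0) := by
      simpa using (hx.const_sub (f x)).norm
    simpa [Real.zero_rpow hw.ne'] using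
      ENNReal.tendsto_ofReal (h_norm.rpow_const (p := w) (Or.inr hw.le))

theorem tendsto_lintegral_norm_sub_contraction_comp_rpow {ι 𝕜 X E : Type*} [TopologicalSpace X]
    [MeasurableSpace X] [OpensMeasurableSpace X] {m : Measure X} [NontriviallyNormedField 𝕜]
    [SeminormedAddCommGroup E] [NormedSpace 𝕜 E] [SecondCountableTopologyEither X E]
    {l : Filter ι} [l.IsCountablyGenerated] {w : ℝ} (hw : 0 < w)
    {R : ι → X → X} (hR : ∀ i, Continuous (R i))
    (hR_lim : ∀ x, Tendsto (fun i => R i x) l (𝓝 x))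
    {Q : ι → E →L[𝕜] E} (hQ : ∀ i, ‖Q i‖ ≤ 1) (hQ_lim : ∀ y, Tendsto (fun i => Q i y) l (𝓝 y))
    {f : X → E} (hf : Continuous f) {G : X → ℝ} (hf_le : ∀ x, ‖f x‖ ^ w ≤ G x)
    (hGR : ∀ i x, G (R i x) ≤ G x) (hG : Integrable G m) :
    Tendsto (fun i => ∫⁻ x, ENNReal.ofReal (‖f x - Q i (f (R i x))‖ ^ w) ∂m) l (𝓝 0) := by
  have h_le (i : ι) (x : X) : ‖Q i (f (R i x))‖ ^ w ≤ G x :=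
    calc ‖Q i (f (R i x))‖ ^ w ≤ ‖f (R i x)‖ ^ w := by
          gcongr
          exact norm_apply_le_of_opNorm_le_one (hQ i) _
      _ ≤ G (R i x) := hf_le _
      _ ≤ G x := hGR i x
  have h_lim (x : X) : Tendsto (fun i => Q i (f (R i x))) l (𝓝 (f x)) :=
    tendsto_apply_of_opNorm_le_one hQ hQ_lim ((hf.tendsto x).comp (hR_lim x))
  exact tendsto_lintegral_norm_sub_rpow_of_dominated hw hf.aestronglyMeasurable
    (.of_forall fun i => ((Q i).continuous.comp (hf.comp (hR i))).aestronglyMeasurable)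
    (.of_forall hf_le) (.of_forall fun i => .of_forall (h_le i)) hG (.of_forall h_lim)

end DominatedConvergence

section OrthonormalProjection

variable {ι 𝕜 E : Type*} [RCLike 𝕜] [NormedAddCommGroup E] [InnerProductSpace 𝕜 E] {e : ι → E}

/-- For orthonormal `e`, the orthogonal projection onto the span of the `e i` with `i ∈ s`, written
as a sum of rank-one operators. The paper's `P_d` is the case `s = Finset.range d`, so that
`e_1, …, e_d` become `e 0, …, e (d - 1)`. -/
noncomputable def orthonormalProjection (𝕜 : Type*) {ι E : Type*} [RCLike 𝕜] [NormedAddCommGroup E]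
    [InnerProductSpace 𝕜 E] (e : ι → E) (s : Finset ι) : E →L[𝕜] E :=
  ∑ i ∈ s, InnerProductSpace.rankOne 𝕜 (e i) (e i)

theorem orthonormalProjection_apply (s : Finset ι) (x : E) :
    orthonormalProjection 𝕜 e s x = ∑ i ∈ s, inner 𝕜 (e i) x • e i := by
  simp [orthonormalProjection]

theorem norm_orthonormalProjection_le_one (he : Orthonormal 𝕜 e) (s : Finset ι) :
    ‖orthonormalProjection 𝕜 e s‖ ≤ 1 := by
  refine ContinuousLinearMap.opNorm_le_bound _ zero_le_one fun x => ?_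
  rw [one_mul, ← sq_le_sq₀ (norm_nonneg _) (norm_nonneg _)]
  calc ‖orthonormalProjection 𝕜 e s x‖ ^ 2 = ∑ i ∈ s, ‖inner 𝕜 (e i) x‖ ^ 2 := by
        rw [orthonormalProjection_apply, ← inner_self_eq_norm_sq (𝕜 := 𝕜), he.inner_sum, map_sum]
        exact Finset.sum_congr rfl fun i _ => by
          rw [RCLike.conj_mul, ← RCLike.ofReal_pow, RCLike.ofReal_re]
    _ ≤ ‖x‖ ^ 2 := he.sum_inner_products_le x

theorem tendsto_orthonormalProjection [CompleteSpace E] (he : Orthonormal 𝕜 e)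
    (h_dense : Dense (Submodule.span 𝕜 (Set.range e) : Set E)) (x : E) :
    Tendsto (fun s => orthonormalProjection 𝕜 e s x) atTop (𝓝 x) := by
  have h_top : ⊤ ≤ (Submodule.span 𝕜 (Set.range e)).topologicalClosure :=
    (Submodule.dense_iff_topologicalClosure_eq_top.mp h_dense).ge
  simpa [HasSum, orthonormalProjection_apply, HilbertBasis.repr_apply_apply] using
    (HilbertBasis.mk he h_top).hasSum_repr x

end OrthonormalProjection

theorem separableSpace_of_dense_span {𝕜 E : Type*} [Semiring 𝕜] [AddCommMonoid E]
    [Module 𝕜 E] [TopologicalSpace E] [TopologicalSpace 𝕜] [TopologicalSpace.SeparableSpace 𝕜]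
    [ContinuousAdd E] [ContinuousSMul 𝕜 E] {s : Set E} (hs : TopologicalSpace.IsSeparable s)
    (h_dense : Dense (Submodule.span 𝕜 s : Set E)) : TopologicalSpace.SeparableSpace E := by
  rw [← TopologicalSpace.isSeparable_univ_iff, ← h_dense.closure_eq]
  exact hs.span.closure

theorem contDiff_gradient_s7 {F : Type*} [NormedAddCommGroup F] [InnerProductSpace ℝ F]
    [CompleteSpace F] {f : F → ℝ} {m n : WithTop ℕ∞} (hf : ContDiff ℝ n f) (hmn : m + 1 ≤ n) :
    ContDiff ℝ m (gradient f) :=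
  (InnerProductSpace.toDual ℝ F).symm.contDiff.comp (hf.fderiv_right hmn)

theorem integrable_norm_rpow_of_lintegral_lt_top {E : Type*} [NormedAddCommGroup E]
    [MeasurableSpace E] [OpensMeasurableSpace E] {m : Measure E} {r : ℝ}
    (h : ∫⁻ x, ENNReal.ofReal (‖x‖ ^ r) ∂m < ⊤) : Integrable (fun x => ‖x‖ ^ r) m :=
  (lintegral_ofReal_ne_top_iff_integrable (measurable_norm.pow_const r).aestronglyMeasurable
    (.of_forall fun x : E => Real.rpow_nonneg (norm_nonneg x) r)).mp h.ne

theorem norm_apply_rpow_le_of_opNorm_rpow_le {𝕜 E F : Type*} [NontriviallyNormedField 𝕜]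
    [SeminormedAddCommGroup E] [NormedSpace 𝕜 E] [SeminormedAddCommGroup F] [NormedSpace 𝕜 F]
    {w M : ℝ} (hw : 0 ≤ w) {T : E →L[𝕜] F} (hT : ‖T‖ ^ w ≤ M) (x : E) : ‖T x‖ ^ w ≤ M * ‖x‖ ^ w :=
  calc ‖T x‖ ^ w ≤ (‖T‖ * ‖x‖) ^ w := by
        gcongr
        exact T.le_opNorm x
    _ = ‖T‖ ^ w * ‖x‖ ^ w := Real.mul_rpow (norm_nonneg _) (norm_nonneg _)
    _ ≤ M * ‖x‖ ^ w := by gcongr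

theorem cylindrical_approximation_tendsto_weighted_sobolev_general
    {ι H : Type*} [NormedAddCommGroup H] [InnerProductSpace ℝ H] [CompleteSpace H]
    [SecondCountableTopology H] [MeasurableSpace H] [BorelSpace H]
    {l : Filter ι} [l.IsCountablyGenerated]
    {P : ι → H →L[ℝ] H} (hP : ∀ i, ‖P i‖ ≤ 1) (hP_lim : ∀ x, Tendsto (fun i => P i x) l (𝓝 x))
    {w q : ℝ} (hw : 0 < w) (hq : 0 ≤ q)
    {μ μ' : Measure H} [IsFiniteMeasure μ] [SFinite μ']
    (hμ : Integrable (fun x => ‖x‖ ^ q) μ) (hμ' : Integrable (fun h => ‖h‖ ^ w) μ')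
    {v : H → ℝ} (hv : ContDiff ℝ 2 v) {C : ℝ}
    (hgrowth : ∀ x : H,
      |v x| ^ w + ‖gradient v x‖ ^ w + ‖fderiv ℝ (gradient v) x‖ ^ w ≤ C * (1 + ‖x‖ ^ q)) :
    Tendsto (fun i => ∫⁻ x, ENNReal.ofReal (|v x - v (P i x)| ^ w) ∂μ) l (𝓝 0) ∧
    Tendsto (fun i => ∫⁻ x, ENNReal.ofReal (‖gradient v x - P i (gradient v (P i x))‖ ^ w) ∂μ)
      l (𝓝 0) ∧
    Tendsto (fun i => ∫⁻ p : H × H, ENNReal.ofReal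
        (‖fderiv ℝ (gradient v) p.1 p.2 -
            P i (fderiv ℝ (gradient v) (P i p.1) (P i p.2))‖ ^ w) ∂(μ.prod μ'))
      l (𝓝 0) := by
  have hC : 0 ≤ C := by
    refine nonneg_of_mul_nonneg_left (le_trans ?_ (hgrowth 0)) ?_ <;> positivity
  have hv_le (x : H) : ‖v x‖ ^ w ≤ C * (1 + ‖x‖ ^ q) :=
    (le_add_of_nonneg_right (by positivity)).trans
      ((le_add_of_nonneg_right (by positivity)).trans (hgrowth x))
  have hDv_le (x : H) : ‖gradient v x‖ ^ w ≤ C * (1 + ‖x‖ ^ q) :=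
    (le_add_of_nonneg_left (by positivity)).trans
      ((le_add_of_nonneg_right (by positivity)).trans (hgrowth x))
  have hD2v_le (x : H) : ‖fderiv ℝ (gradient v) x‖ ^ w ≤ C * (1 + ‖x‖ ^ q) :=
    (le_add_of_nonneg_left (by positivity)).trans (hgrowth x)
  have hP_norm (i : ι) (x : H) : ‖P i x‖ ≤ ‖x‖ := norm_apply_le_of_opNorm_le_one (hP i) x
  have hP_growth (i : ι) (x : H) : C * (1 + ‖P i x‖ ^ q) ≤ C * (1 + ‖x‖ ^ q) := by
    gcongr
    exact hP_norm i x
  have h_int : Integrable (fun x => C * (1 + ‖x‖ ^ q)) μ :=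
    ((integrable_const 1).add hμ).const_mul C
  have hDv_contDiff : ContDiff ℝ 1 (gradient v) := contDiff_gradient_s7 hv one_add_one_eq_two.le
  have hD2v_cont : Continuous (fun p : H × H => fderiv ℝ (gradient v) p.1 p.2) :=
    ((hDv_contDiff.continuous_fderiv one_ne_zero).comp continuous_fst).clm_apply continuous_snd
  refine ⟨?_, ?_, ?_⟩
  · exact tendsto_lintegral_norm_sub_contraction_comp_rpow hw (fun i => (P i).continuous) hP_lim
      (Q := fun _ => .id ℝ ℝ) (fun _ => ContinuousLinearMap.norm_id_le)
      (fun _ => tendsto_const_nhds) hv.continuous hv_le hP_growth h_int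
  · exact tendsto_lintegral_norm_sub_contraction_comp_rpow hw (fun i => (P i).continuous) hP_lim
      hP hP_lim hDv_contDiff.continuous hDv_le hP_growth h_int
  · refine tendsto_lintegral_norm_sub_contraction_comp_rpow hw
      (R := fun i => Prod.map (P i) (P i)) (G := fun p => C * (1 + ‖p.1‖ ^ q) * ‖p.2‖ ^ w)
      (fun i => (P i).continuous.prodMap (P i).continuous)
      (fun p => (hP_lim p.1).prodMk_nhds (hP_lim p.2))
      hP hP_lim hD2v_cont (fun p => norm_apply_rpow_le_of_opNorm_rpow_le hw.le (hD2v_le p.1) p.2)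
      (fun i p => ?_) (h_int.mul_prod hμ')
    exact mul_le_mul (hP_growth i p.1) (by gcongr; exact hP_norm i p.2)
      (by positivity) (by positivity)

/-- convergence of the cylindrical approximations `v^d(x) = v(P d x)` of a function
`v ∈ C²_{w,q}(H)` to `v` in the weighted Sobolev-type norm determined by Borel probability
measures `μ, μ'` with `‖μ‖_q < ∞` and `‖μ'‖_w < ∞`. -/
theorem cylindrical_approximation_tendsto_weighted_sobolev
    {H : Type*} [NormedAddCommGroup H] [InnerProductSpace ℝ H] [CompleteSpace H]
    [MeasurableSpace H] [BorelSpace H]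
    (e : ℕ → H) (he : Orthonormal ℝ e)
    (htot : Dense ((Submodule.span ℝ (Set.range e) : Submodule ℝ H) : Set H))
    (P : ℕ → H → H)
    (hP : ∀ (d : ℕ) (x : H), P d x = ∑ i ∈ Finset.range d, ⟪e i, x⟫ • e i)
    (w q : ℝ) (hw : 1 ≤ w) (hq : 1 ≤ q)
    (μ μ' : Measure H) [IsProbabilityMeasure μ] [IsProbabilityMeasure μ']
    (hμq : ∫⁻ x, ENNReal.ofReal (‖x‖ ^ q) ∂μ < ⊤)
    (hμ'w : ∫⁻ h, ENNReal.ofReal (‖h‖ ^ w) ∂μ' < ⊤)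
    (v : H → ℝ) (hv : ContDiff ℝ 2 v)
    (C : ℝ) (hC : 0 < C)
    (hgrowth : ∀ x : H,
      |v x| ^ w + ‖gradient v x‖ ^ w + ‖fderiv ℝ (gradient v) x‖ ^ w ≤ C * (1 + ‖x‖ ^ q)) :
    Tendsto (fun d : ℕ =>
        ∫⁻ x, ENNReal.ofReal (|v x - v (P d x)| ^ w) ∂μ) atTop (𝓝 0) ∧
    Tendsto (fun d : ℕ =>
        ∫⁻ x, ENNReal.ofReal (‖gradient v x - P d (gradient v (P d x))‖ ^ w) ∂μ) atTop (𝓝 0) ∧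
    Tendsto (fun d : ℕ =>
        ∫⁻ p : H × H, ENNReal.ofReal
          (‖fderiv ℝ (gradient v) p.1 p.2 -
              P d (fderiv ℝ (gradient v) (P d p.1) (P d p.2))‖ ^ w) ∂(μ.prod μ'))
      atTop (𝓝 0) := by
  have : TopologicalSpace.SeparableSpace H :=
    separableSpace_of_dense_span (Set.countable_range e).isSeparable htot
  have : SecondCountableTopology H := UniformSpace.secondCountable_of_separable H
  obtain rfl : P = fun d => ⇑(orthonormalProjection ℝ e (Finset.range d)) := by
    ext d x
    rw [hP, orthonormalProjection_apply]
  exact cylindrical_approximation_tendsto_weighted_sobolev_general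
    (fun d => norm_orthonormalProjection_le_one he (Finset.range d))
    (fun x => (tendsto_orthonormalProjection he htot x).comp tendsto_finset_range)
    (zero_lt_one.trans_le hw) (zero_le_one.trans hq)
    (integrable_norm_rpow_of_lintegral_lt_top hμq)
    (integrable_norm_rpow_of_lintegral_lt_top hμ'w) hv hgrowth
end

section
/- Verification of the L² consistency condition when L commutes with the projections: assume in addition that L P_d x = P_d L x for every x ∈ D(L) and every d ∈ ℕ (for instance when L is diagonalized by the basis {e_i}). Let v ∈ C²(H) be such that Dv(x) ∈ D(L) for every x ∈ H, the map x ↦ L Dv(x) is continuous from H to H, and ‖L Dv(x)‖⁴ ≤ C(1+‖x‖^q) for some C > 0, q ≥ 1 and all x ∈ H. Let μ be a Borel probability measure on H with ∫_H ‖x‖⁴ μ(dx) < ∞ and ∫_H ‖x‖^q μ(dx) < ∞. Then ∫_H |⟨L Dv(x) − L P_d Dv(P_d x), x⟩|² μ(dx) → 0 as d → ∞. -/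
open Filter Topology MeasureTheory
open scoped RealInnerProductSpace ENNReal

/-!
Commutation turns `L (P d (Dv (P d x)))` into `P d (F (P d x))`, where `F = L ∘ Dv` is continuous.
Since the projections are nonexpansive and converge strongly to the identity, `P d (F (P d x))`
tends to `F x` for every `x`, and the growth bound on `F` dominates `‖F x - P d (F (P d x))‖ ^ 4`
uniformly in `d`. Hence the error tends to `0` in `L⁴(μ)`, and by the Cauchy–Schwarz inequality its
pairing with the identity, which lies in `L⁴(μ)`, tends to `0` in `L²(μ)`.
-/

section OrthonormalPartialSums

variable {𝕜 E ι : Type*} [RCLike 𝕜] [NormedAddCommGroup E] [InnerProductSpace 𝕜 E] {v : ι → E}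

instance finiteDimensional_span_image_finset (s : Finset ι) :
    FiniteDimensional 𝕜 (Submodule.span 𝕜 (v '' s)) :=
  FiniteDimensional.span_of_finite 𝕜 (s.finite_toSet.image v)

theorem starProjection_span_image_eq_sum (hv : Orthonormal 𝕜 v) (s : Finset ι) (x : E) :
    (Submodule.span 𝕜 (v '' s)).starProjection x = ∑ i ∈ s, inner 𝕜 (v i) x • v i := by
  refine Submodule.eq_starProjection_of_mem_orthogonal ?_ ?_
  · exact Submodule.sum_mem _ fun i hi ↦
      Submodule.smul_mem _ _ (Submodule.subset_span (Set.mem_image_of_mem v hi))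
  · rw [Submodule.mem_orthogonal]
    intro u hu
    induction hu using Submodule.span_induction with
    | mem u hu =>
      obtain ⟨i, hi, rfl⟩ := hu
      rw [inner_sub_right, hv.inner_right_sum _ hi, sub_self]
    | zero => exact inner_zero_left _
    | add u w _ _ hu hw => rw [inner_add_left, hu, hw, add_zero]
    | smul c u _ hu => rw [inner_smul_left, hu, mul_zero]

theorem tendsto_starProjection_span_image
    (hv : Dense (Submodule.span 𝕜 (Set.range v) : Set E)) (x : E) :
    Tendsto (fun s : Finset ι ↦ (Submodule.span 𝕜 (v '' s)).starProjection x) atTop (𝓝 x) := by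
  have iUnion_image : ⋃ s : Finset ι, v '' s = Set.range v := by
    have iUnion_coe : ⋃ s : Finset ι, (s : Set ι) = Set.univ :=
      Set.iUnion_eq_univ_iff.2 fun i ↦ ⟨{i}, Finset.mem_coe.2 (Finset.mem_singleton_self i)⟩
    rw [← Set.image_iUnion, iUnion_coe, Set.image_univ]
  refine Submodule.starProjection_tendsto_self _
    (fun s t hst ↦ Submodule.span_mono (Set.image_mono (Finset.coe_subset.2 hst))) x ?_
  rw [← Submodule.span_iUnion, iUnion_image,
    Submodule.dense_iff_topologicalClosure_eq_top.1 hv]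

end OrthonormalPartialSums

theorem tendsto_apply_of_lipschitzWith {ι α β : Type*} [PseudoMetricSpace α]
    [PseudoMetricSpace β] {l : Filter ι} {K : NNReal} {T : ι → α → β} {u : ι → α} {y : α} {z : β}
    (hT : ∀ i, LipschitzWith K (T i)) (hu : Tendsto u l (𝓝 y))
    (hTy : Tendsto (fun i ↦ T i y) l (𝓝 z)) :
    Tendsto (fun i ↦ T i (u i)) l (𝓝 z) := by
  have dist_tendsto : Tendsto (fun i ↦ K * dist y (u i)) l (𝓝 0) := by
    simpa using ((tendsto_const_nhds (x := y)).dist hu).const_mul (K : ℝ)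
  exact hTy.congr_dist
    (squeeze_zero (fun _ ↦ dist_nonneg) (fun i ↦ (hT i).dist_le_mul y (u i)) dist_tendsto)

theorem tendsto_apply_comp_of_lipschitzWith {ι α : Type*} [PseudoMetricSpace α] {l : Filter ι}
    {K : NNReal} {P : ι → α → α} {F : α → α} {x : α} (hP : ∀ i, LipschitzWith K (P i))
    (hPlim : ∀ y, Tendsto (fun i ↦ P i y) l (𝓝 y)) (hF : ContinuousAt F x) :
    Tendsto (fun i ↦ P i (F (P i x))) l (𝓝 (F x)) :=
  tendsto_apply_of_lipschitzWith hP (hF.tendsto.comp (hPlim x)) (hPlim (F x))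

theorem add_rpow_le_two_rpow_mul {a b B p : ℝ} (ha : 0 ≤ a) (hb : 0 ≤ b) (hp : 0 ≤ p)
    (haB : a ^ p ≤ B) (hbB : b ^ p ≤ B) : (a + b) ^ p ≤ 2 ^ p * B := by
  wlog hab : a ≤ b generalizing a b
  · rw [add_comm]
    exact this hb ha hbB haB (le_of_not_ge hab)
  calc (a + b) ^ p ≤ (2 * b) ^ p := by gcongr; linarith
    _ = 2 ^ p * b ^ p := Real.mul_rpow zero_le_two hb
    _ ≤ 2 ^ p * B := by gcongr

theorem lintegral_norm_inner_rpow_le {𝕜 E Ω : Type*} [RCLike 𝕜] [NormedAddCommGroup E]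
    [InnerProductSpace 𝕜 E] [MeasurableSpace E] [OpensMeasurableSpace E] [MeasurableSpace Ω]
    {μ : Measure Ω} {f g : Ω → E} {p r s : ℝ} (hp : 0 ≤ p) (hrs : r.HolderConjugate s)
    (hf : AEMeasurable f μ) (hg : AEMeasurable g μ) :
    ∫⁻ ω, ENNReal.ofReal (‖inner 𝕜 (f ω) (g ω)‖ ^ p) ∂μ ≤
      (∫⁻ ω, ENNReal.ofReal (‖f ω‖ ^ (p * r)) ∂μ) ^ (1 / r) *
        (∫⁻ ω, ENNReal.ofReal (‖g ω‖ ^ (p * s)) ∂μ) ^ (1 / s) := by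
  have ofReal_rpow_mul (a : E) {t : ℝ} (ht : 0 ≤ t) :
      ENNReal.ofReal (‖a‖ ^ (p * t)) = ENNReal.ofReal (‖a‖ ^ p) ^ t := by
    rw [Real.rpow_mul (norm_nonneg a), ENNReal.ofReal_rpow_of_nonneg (by positivity) ht]
  simp only [ofReal_rpow_mul _ hrs.nonneg, ofReal_rpow_mul _ hrs.symm.nonneg]
  refine le_trans (lintegral_mono fun ω ↦ ?_) (ENNReal.lintegral_mul_le_Lp_mul_Lq μ hrs
    (hf.norm.pow_const p).ennreal_ofReal (hg.norm.pow_const p).ennreal_ofReal)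
  rw [Pi.mul_apply, ← ENNReal.ofReal_mul (by positivity),
    ← Real.mul_rpow (norm_nonneg _) (norm_nonneg _)]
  gcongr
  exact norm_inner_le_norm _ _

section NonexpansiveApproximation

variable {ι E : Type*} {l : Filter ι} [SeminormedAddCommGroup E] {P : ι → E → E} {F : E → E}

theorem norm_sub_apply_comp_rpow_le {T : E → E} {C p q : ℝ} (hT : ∀ x, ‖T x‖ ≤ ‖x‖)
    (hp : 0 ≤ p) (hq : 0 ≤ q) (hF : ∀ x, ‖F x‖ ^ p ≤ C * (1 + ‖x‖ ^ q)) (x : E) :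
    ‖F x - T (F (T x))‖ ^ p ≤ 2 ^ p * (C * (1 + ‖x‖ ^ q)) := by
  have C_nonneg : 0 ≤ C :=
    nonneg_of_mul_nonneg_left ((Real.rpow_nonneg (norm_nonneg _) p).trans (hF x)) (by positivity)
  have growth_comp : ‖F (T x)‖ ^ p ≤ C * (1 + ‖x‖ ^ q) := by
    refine (hF (T x)).trans ?_
    gcongr
    exact hT x
  calc ‖F x - T (F (T x))‖ ^ p
      ≤ (‖F x‖ + ‖F (T x)‖) ^ p := by
        gcongr
        exact (norm_sub_le _ _).trans (by gcongr; exact hT _)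
    _ ≤ 2 ^ p * (C * (1 + ‖x‖ ^ q)) :=
        add_rpow_le_two_rpow_mul (norm_nonneg _) (norm_nonneg _) hp (hF x) growth_comp

theorem tendsto_lintegral_norm_sub_apply_comp_rpow [MeasurableSpace E] [OpensMeasurableSpace E]
    [l.IsCountablyGenerated] {C p q : ℝ} {μ : Measure E} [IsFiniteMeasure μ]
    (hPlip : ∀ i, LipschitzWith 1 (P i)) (hPzero : ∀ i, P i 0 = 0)
    (hPlim : ∀ x, Tendsto (fun i ↦ P i x) l (𝓝 x)) (hF : Continuous F) (hp : 0 < p) (hq : 0 ≤ q)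
    (hgrowth : ∀ x, ‖F x‖ ^ p ≤ C * (1 + ‖x‖ ^ q))
    (hμq : ∫⁻ x, ENNReal.ofReal (‖x‖ ^ q) ∂μ < ⊤) :
    Tendsto (fun i ↦ ∫⁻ x, ENNReal.ofReal (‖F x - P i (F (P i x))‖ ^ p) ∂μ) l (𝓝 0) := by
  have norm_P_le (i : ι) (x : E) : ‖P i x‖ ≤ ‖x‖ := by
    simpa using (hPlip i).norm_le_mul (hPzero i) x
  have continuous_error (i : ι) : Continuous fun x ↦ ‖F x - P i (F (P i x))‖ ^ p :=
    (hF.sub ((hPlip i).continuous.comp (hF.comp (hPlip i).continuous))).norm.rpow_const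
      fun _ ↦ .inr hp.le
  have moment_integrable : Integrable (fun x ↦ ‖x‖ ^ q) μ :=
    (lintegral_ofReal_ne_top_iff_integrable
      (continuous_norm.rpow_const fun _ ↦ .inr hq).aestronglyMeasurable
      (.of_forall fun _ ↦ by positivity)).1 hμq.ne
  have bound_integrable : Integrable (fun x ↦ 2 ^ p * (C * (1 + ‖x‖ ^ q))) μ :=
    (((integrable_const 1).add moment_integrable).const_mul C).const_mul (2 ^ p)
  have error_tendsto (x : E) :
      Tendsto (fun i ↦ ENNReal.ofReal (‖F x - P i (F (P i x))‖ ^ p)) l (𝓝 0) := by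
    have norm_tendsto : Tendsto (fun i ↦ ‖F x - P i (F (P i x))‖) l (𝓝 0) := by
      simpa using ((tendsto_const_nhds (x := F x)).sub
        (tendsto_apply_comp_of_lipschitzWith hPlip hPlim (hF.continuousAt (x := x)))).norm
    simpa [Real.zero_rpow hp.ne'] using
      ENNReal.tendsto_ofReal (norm_tendsto.rpow_const (.inr hp.le))
  simpa using tendsto_lintegral_filter_of_dominated_convergence (f := fun _ ↦ 0) _
    (.of_forall fun i ↦ (continuous_error i).measurable.ennreal_ofReal)
    (.of_forall fun i ↦ .of_forall fun x ↦ ENNReal.ofReal_le_ofReal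
      (norm_sub_apply_comp_rpow_le (norm_P_le i) hp.le hq hgrowth x))
    bound_integrable.lintegral_lt_top.ne (.of_forall error_tendsto)

end NonexpansiveApproximation

theorem consistency_L2_of_commuting_projections_general
    {ι H : Type*} [NormedAddCommGroup H] [InnerProductSpace ℝ H]
    [MeasurableSpace H] [BorelSpace H] {l : Filter ι} [l.IsCountablyGenerated]
    {P : ι → H → H} (hPlip : ∀ i, LipschitzWith 1 (P i)) (hPzero : ∀ i, P i 0 = 0)
    (hPlim : ∀ x, Tendsto (fun i ↦ P i x) l (𝓝 x))
    {L : H → H} {D : Set H} (hcomm : ∀ i, ∀ x ∈ D, L (P i x) = P i (L x))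
    {g : H → H} (hgD : ∀ x, g x ∈ D) (hLg : Continuous fun x ↦ L (g x))
    {C q : ℝ} (hq : 0 ≤ q) (hgrowth : ∀ x, ‖L (g x)‖ ^ (4 : ℝ) ≤ C * (1 + ‖x‖ ^ q))
    {μ : Measure H} [IsFiniteMeasure μ]
    (hμ4 : ∫⁻ x, ENNReal.ofReal (‖x‖ ^ (4 : ℝ)) ∂μ < ⊤)
    (hμq : ∫⁻ x, ENNReal.ofReal (‖x‖ ^ q) ∂μ < ⊤) :
    Tendsto (fun i ↦
        ∫⁻ x, ENNReal.ofReal (|⟪L (g x) - L (P i (g (P i x))), x⟫| ^ (2 : ℝ)) ∂μ)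
      l (𝓝 0) := by
  simp only [fun i x ↦ hcomm i _ (hgD (P i x))]
  have error_measurable (i : ι) : AEMeasurable (fun x ↦ L (g x) - P i (L (g (P i x)))) μ :=
    (hLg.sub ((hPlip i).continuous.comp (hLg.comp (hPlip i).continuous))).aemeasurable
  have cauchy_schwarz (i : ι) :
      ∫⁻ x, ENNReal.ofReal (|⟪L (g x) - P i (L (g (P i x))), x⟫| ^ (2 : ℝ)) ∂μ ≤
        (∫⁻ x, ENNReal.ofReal (‖L (g x) - P i (L (g (P i x)))‖ ^ (4 : ℝ)) ∂μ) ^ (1 / 2 : ℝ) *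
          (∫⁻ x, ENNReal.ofReal (‖x‖ ^ (4 : ℝ)) ∂μ) ^ (1 / 2 : ℝ) := by
    rw [show (4 : ℝ) = 2 * 2 by norm_num]
    exact lintegral_norm_inner_rpow_le (𝕜 := ℝ) zero_le_two Real.HolderConjugate.two_two
      (error_measurable i) aemeasurable_id
  have L4_error_tendsto := tendsto_lintegral_norm_sub_apply_comp_rpow hPlip hPzero hPlim hLg
    zero_lt_four hq hgrowth hμq
  have bound_tendsto := ENNReal.Tendsto.mul_const (L4_error_tendsto.ennrpow_const (1 / 2))
    (.inr (ENNReal.rpow_ne_top_of_nonneg one_half_pos.le hμ4.ne))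
  exact tendsto_of_tendsto_of_tendsto_of_le_of_le tendsto_const_nhds
    (by simpa using bound_tendsto) (fun _ ↦ zero_le) cauchy_schwarz

/-- verification of the L² consistency condition when the (possibly unbounded)
closed, densely defined operator `L` commutes with the projections `P d`. -/
theorem consistency_L2_of_commuting_projections
    {H : Type*} [NormedAddCommGroup H] [InnerProductSpace ℝ H] [CompleteSpace H]
    [MeasurableSpace H] [BorelSpace H]
    (e : ℕ → H) (he : Orthonormal ℝ e)
    (htot : Dense ((Submodule.span ℝ (Set.range e) : Submodule ℝ H) : Set H))
    (P : ℕ → H → H)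
    (hP : ∀ (d : ℕ) (x : H), P d x = ∑ i ∈ Finset.range d, ⟪e i, x⟫ • e i)
    (L : H →ₗ[ℝ] H) (Ldom : Submodule ℝ H)
    (hLdense : Dense (Ldom : Set H))
    (hLclosed : IsClosed {p : H × H | p.1 ∈ Ldom ∧ p.2 = L p.1})
    (heL : ∀ i : ℕ, e i ∈ Ldom)
    (hcomm : ∀ (d : ℕ), ∀ x ∈ Ldom, L (P d x) = P d (L x))
    (v : H → ℝ) (hv : ContDiff ℝ 2 v)
    (hDvdom : ∀ x : H, gradient v x ∈ Ldom)
    (hLDv : Continuous fun x : H => L (gradient v x))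
    (C q : ℝ) (hC : 0 < C) (hq : 1 ≤ q)
    (hgrowth : ∀ x : H, ‖L (gradient v x)‖ ^ (4 : ℝ) ≤ C * (1 + ‖x‖ ^ q))
    (μ : Measure H) [IsProbabilityMeasure μ]
    (hμ4 : ∫⁻ x, ENNReal.ofReal (‖x‖ ^ (4 : ℝ)) ∂μ < ⊤)
    (hμq : ∫⁻ x, ENNReal.ofReal (‖x‖ ^ q) ∂μ < ⊤) :
    Tendsto (fun d : ℕ =>
        ∫⁻ x, ENNReal.ofReal
          (|⟪L (gradient v x) - L (P d (gradient v (P d x))), x⟫| ^ (2 : ℝ)) ∂μ)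
      atTop (𝓝 0) := by
  obtain rfl : P = fun d ↦ ⇑(Submodule.span ℝ (e '' Finset.range d)).starProjection :=
    funext₂ fun d x ↦ (hP d x).trans (starProjection_span_image_eq_sum he _ x).symm
  exact consistency_L2_of_commuting_projections_general
    (fun _ ↦ Submodule.lipschitzWith_starProjection _) (fun _ ↦ map_zero _)
    (fun x ↦ (tendsto_starProjection_span_image htot x).comp tendsto_finset_range)
    hcomm hDvdom hLDv (zero_le_one.trans hq) hgrowth hμ4 hμq
end

section
/- Verification of the compact-set consistency condition when L commutes with the projections: assume in addition that L P_d x = P_d L x for every x ∈ D(L) and every d ∈ ℕ. Let v ∈ C²(H) be such that Dv(x) ∈ D(L) for every x ∈ H and the map x ↦ L Dv(x) is continuous from H to H. Then for every compact set K ⊆ H, sup_{x∈K} |⟨L(Dv(x) − P_d Dv(P_d x)), x⟩| → 0 as d → ∞. -/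
open Filter Topology
open scoped RealInnerProductSpace

/-! Write `g` for `Dv` and `h x = ⟪L (g x), x⟫`. Symmetry of `P d` and commutation with `L` turn
the quantity to be estimated into `h x - h (P d x)`. The `P d` are equicontinuous and converge
pointwise to the identity, hence converge to it in the compact-open topology of `C(H, H)`.
Composition with the continuous `h` preserves this convergence, so `h ∘ P d → h` uniformly on
compact sets. -/

theorem tendsto_compactOpen_iff_of_equicontinuous {ι X Y : Type*} [TopologicalSpace X]
    [UniformSpace Y] {l : Filter ι} {F : ι → C(X, Y)} {f : C(X, Y)}
    (hF : Equicontinuous fun i ↦ (F i : X → Y)) :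
    Tendsto F l (𝓝 f) ↔ ∀ x, Tendsto (fun i ↦ F i x) l (𝓝 (f x)) := by
  rw [ContinuousMap.tendsto_iff_forall_isCompact_tendstoUniformlyOn, ← tendsto_pi_nhds,
    ← EquicontinuousOn.tendsto_uniformOnFun_iff_pi (𝔖 := {K | IsCompact K}) (fun _ hK ↦ hK)
      (Set.sUnion_eq_univ_iff.2 fun x ↦ ⟨{x}, isCompact_singleton, rfl⟩)
      (fun K _ ↦ hF.equicontinuousOn K), UniformOnFun.tendsto_iff_tendstoUniformlyOn]
  rfl

instance finite_span_image_finset {R M ι : Type*} [Semiring R] [AddCommMonoid M] [Module R M]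
    (e : ι → M) (s : Finset ι) : Module.Finite R (Submodule.span R (e '' s)) :=
  Module.Finite.span_of_finite R (s.finite_toSet.image e)

section InnerProductSpace

variable {𝕜 E : Type*} [RCLike 𝕜] [NormedAddCommGroup E] [InnerProductSpace 𝕜 E]

open scoped InnerProductSpace

theorem uniformEquicontinuous_starProjection {ι : Type*} (U : ι → Submodule 𝕜 E)
    [∀ i, (U i).HasOrthogonalProjection] :
    UniformEquicontinuous fun i ↦ ((U i).starProjection : E → E) :=
  LipschitzWith.uniformEquicontinuous _ 1 fun i ↦ (U i).lipschitzWith_starProjection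

theorem tendsto_compactOpen_starProjection_id {ι : Type*} [Preorder ι] (U : ι → Submodule 𝕜 E)
    [∀ i, (U i).HasOrthogonalProjection] (hU : Monotone U)
    (hdense : Dense ((⨆ i, U i : Submodule 𝕜 E) : Set E)) :
    Tendsto (fun i ↦ ((U i).starProjection : C(E, E))) atTop (𝓝 (.id E)) :=
  (tendsto_compactOpen_iff_of_equicontinuous
    (uniformEquicontinuous_starProjection U).equicontinuous).2
    fun x ↦ Submodule.starProjection_tendsto_self U hU x
      (Submodule.dense_iff_topologicalClosure_eq_top.1 hdense).ge

theorem tendsto_compactOpen_starProjection_span_image_id {ι : Type*} {e : ι → E}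
    (he : Dense (Submodule.span 𝕜 (Set.range e) : Set E)) :
    Tendsto (fun s : Finset ι ↦ ((Submodule.span 𝕜 (e '' s)).starProjection : C(E, E)))
      atTop (𝓝 (.id E)) := by
  have hspan_le : Submodule.span 𝕜 (Set.range e) ≤ ⨆ s : Finset ι, Submodule.span 𝕜 (e '' s) :=
    Submodule.span_le.2 <| Set.range_subset_iff.2 fun i ↦
      le_iSup (fun s : Finset ι ↦ Submodule.span 𝕜 (e '' s)) {i}
        (Submodule.subset_span (Set.mem_image_of_mem e (Finset.mem_singleton_self i)))
  exact tendsto_compactOpen_starProjection_id _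
    (fun s t hst ↦ Submodule.span_mono (Set.image_mono hst)) (he.mono hspan_le)

theorem starProjection_span_image_apply_of_orthonormal {ι : Type*} {e : ι → E}
    (he : Orthonormal 𝕜 e) (s : Finset ι) (x : E) :
    (Submodule.span 𝕜 (e '' s)).starProjection x = ∑ i ∈ s, ⟪e i, x⟫_𝕜 • e i := by
  have hmem : ∑ i ∈ s, ⟪e i, x⟫_𝕜 • e i ∈ Submodule.span 𝕜 (e '' s) :=
    Submodule.sum_smul_mem _ _ fun i hi ↦ Submodule.subset_span (Set.mem_image_of_mem e hi)
  have hortho : Submodule.span 𝕜 {x - ∑ i ∈ s, ⟪e i, x⟫_𝕜 • e i} ⟂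
      Submodule.span 𝕜 (e '' s) := by
    rw [Submodule.isOrtho_comm, Submodule.isOrtho_span]
    rintro _ ⟨j, hj, rfl⟩ _ rfl
    rw [inner_sub_right, he.inner_right_sum _ hj, sub_self]
  exact Submodule.eq_starProjection_of_mem_orthogonal hmem
    (hortho (Submodule.mem_span_singleton_self _))

theorem inner_map_sub_comp_of_isSymmetric {T : E →ₗ[𝕜] E} (hT : T.IsSymmetric) (L : E →ₗ[𝕜] E)
    (g : E → E) {x : E} (hcomm : L (T (g (T x))) = T (L (g (T x)))) :
    ⟪L (g x - T (g (T x))), x⟫_𝕜 = ⟪L (g x), x⟫_𝕜 - ⟪L (g (T x)), T x⟫_𝕜 := by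
  rw [map_sub, inner_sub_left, hcomm, hT]

theorem consistency_compact_of_commuting_projections_general {ι : Type*} {l : Filter ι}
    {T : ι → E →L[𝕜] E} (hsymm : ∀ d, (T d : E →ₗ[𝕜] E).IsSymmetric)
    (hT : Tendsto (fun d ↦ (T d : C(E, E))) l (𝓝 (.id E)))
    (L : E →ₗ[𝕜] E) (g : E → E) (hcomm : ∀ d x, L (T d (g x)) = T d (L (g x)))
    (hLg : Continuous fun x ↦ L (g x)) {K : Set E} (hK : IsCompact K) :
    TendstoUniformlyOn (fun d x ↦ ⟪L (g x - T d (g (T d x))), x⟫_𝕜) 0 l K := by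
  let h : C(E, 𝕜) := ⟨fun x ↦ ⟪L (g x), x⟫_𝕜, hLg.inner continuous_id⟩
  have hcomp : Tendsto (fun d ↦ h.comp (T d : C(E, E))) l (𝓝 h) :=
    (h.continuous_postcomp.tendsto _).comp hT
  have hdiff : Tendsto (fun d ↦ h - h.comp (T d : C(E, E))) l (𝓝 0) := by
    simpa only [sub_self] using hcomp.const_sub h
  refine (ContinuousMap.tendsto_iff_forall_isCompact_tendstoUniformlyOn.1 hdiff K hK).congr
    (.of_forall fun d x _ ↦ ?_)
  exact (inner_map_sub_comp_of_isSymmetric (hsymm d) L g (hcomm d _)).symm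

end InnerProductSpace

/-- verification of the compact-set consistency condition when the (possibly
unbounded) closed, densely defined operator `L` commutes with the projections `P d`. -/
theorem consistency_compact_of_commuting_projections
    {H : Type*} [NormedAddCommGroup H] [InnerProductSpace ℝ H] [CompleteSpace H]
    (e : ℕ → H) (he : Orthonormal ℝ e)
    (htot : Dense ((Submodule.span ℝ (Set.range e) : Submodule ℝ H) : Set H))
    (P : ℕ → H → H)
    (hP : ∀ (d : ℕ) (x : H), P d x = ∑ i ∈ Finset.range d, ⟪e i, x⟫ • e i)
    (L : H →ₗ[ℝ] H) (Ldom : Submodule ℝ H)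
    (hLdense : Dense (Ldom : Set H))
    (hLclosed : IsClosed {p : H × H | p.1 ∈ Ldom ∧ p.2 = L p.1})
    (heL : ∀ i : ℕ, e i ∈ Ldom)
    (hcomm : ∀ (d : ℕ), ∀ x ∈ Ldom, L (P d x) = P d (L x))
    (v : H → ℝ) (hv : ContDiff ℝ 2 v)
    (hDvdom : ∀ x : H, gradient v x ∈ Ldom)
    (hLDv : Continuous fun x : H => L (gradient v x))
    (K : Set H) (hK : IsCompact K) :
    ∀ ε > 0, ∃ D : ℕ, ∀ d ≥ D, ∀ x ∈ K,
      |⟪L (gradient v x - P d (gradient v (P d x))), x⟫| < ε := by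
  obtain rfl : P = fun d ↦ ⇑(Submodule.span ℝ (e '' Finset.range d)).starProjection := by
    funext d x
    rw [hP, starProjection_span_image_apply_of_orthonormal he]
  simpa [Metric.tendstoUniformlyOn_iff] using
    consistency_compact_of_commuting_projections_general
      (fun d ↦ Submodule.starProjection_isSymmetric _)
      ((tendsto_compactOpen_starProjection_span_image_id htot).comp tendsto_finset_range)
      L (gradient v) (fun d x ↦ hcomm d _ (hDvdom x)) hLDv hK
end

section
/- Sequential continuity of the induced operator F^{op} (Lemma on continuity of Φ∘F): let F : H × ℝ × H × L(H) → ℝ satisfy the Lipschitz-type estimate and the sequential continuity assumption below. Let Z_n, Z : H → L(H) be continuous maps (operator-norm topology on L(H)) such that for all compact sets K, K' ⊆ H, sup_{x∈K, h∈K'} ‖(Z_n(x) − Z(x)) h‖ → 0 as n → ∞. Then for every compact set 𝒦 ⊆ H × ℝ × H, sup_{(x,v,p)∈𝒦} |F(x, v, p, Z_n(x)) − F(x, v, p, Z(x))| → 0 as n → ∞. -/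
open Filter Topology
open scoped RealInnerProductSpace

/-!
Against a limit that is continuous on `s`, locally uniform convergence of `f n` to `g` on `s` is the
same as continuous convergence: `f n x → g a` as `n → ∞` and `x → a` jointly. Continuous convergence
passes through any map preserving limits, and since the joint filter is countably generated,
preserving limits of sequences is enough, although the strong operator topology is in general not
first countable. On compact sets locally uniform convergence is uniform.
-/

theorem tendsto_comp_of_seqContinuous {α Y β : Type*} [TopologicalSpace Y] [TopologicalSpace β]
    {G : Y → β} (hG : SeqContinuous G) {l : Filter α} [l.IsCountablyGenerated] {f : α → Y} {y : Y}
    (hf : Tendsto f l (𝓝 y)) : Tendsto (fun a => G (f a)) l (𝓝 (G y)) :=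
  tendsto_of_seq_tendsto fun _ hx => hG (hf.comp hx)

section ContinuousConvergence

variable {ι X β : Type*} [TopologicalSpace X] [UniformSpace β]

theorem tendstoLocallyUniformlyOn_iff_tendsto_prod {f : ι → X → β} {g : X → β} {p : Filter ι}
    {s : Set X} (hg : ContinuousOn g s) :
    TendstoLocallyUniformlyOn f g p s ↔
      ∀ a ∈ s, Tendsto (fun q : ι × X => f q.1 q.2) (p ×ˢ 𝓝[s] a) (𝓝 (g a)) := by
  refine ⟨fun hfg a ha => ?_, fun hfg => ?_⟩
  · refine tendsto_comp_of_locally_uniform_limit_within (hg a ha) tendsto_snd fun u hu => ?_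
    obtain ⟨t, ht, hclose⟩ := hfg u hu a ha
    exact ⟨t, ht, tendsto_fst.eventually hclose⟩
  · refine tendstoLocallyUniformlyOn_iff_forall_tendsto.2 fun a ha => ?_
    have hlim : Tendsto (fun q : ι × X => g q.2) (p ×ˢ 𝓝[s] a) (𝓝 (g a)) :=
      (hg a ha).tendsto.comp tendsto_snd
    exact (hlim.prodMk_nhds (hfg a ha)).mono_right (nhds_le_uniformity (g a))

theorem tendstoLocallyUniformlyOn_comp_of_seqContinuous {Y : Type*} [TopologicalSpace Y]
    [FirstCountableTopology X] {p : Filter ι} [p.IsCountablyGenerated] {G : X × Y → β}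
    (hG : SeqContinuous G) {u : ι → X → Y} {u₀ : X → Y} {s : Set X} (hu₀ : ContinuousOn u₀ s)
    (hu : ∀ a ∈ s, Tendsto (fun q : ι × X => u q.1 q.2) (p ×ˢ 𝓝[s] a) (𝓝 (u₀ a))) :
    TendstoLocallyUniformlyOn (fun n x => G (x, u n x)) (fun x => G (x, u₀ x)) p s := by
  have hGu₀ : ContinuousOn (fun x => G (x, u₀ x)) s := fun a ha =>
    tendsto_comp_of_seqContinuous hG (continuousWithinAt_id.tendsto.prodMk_nhds (hu₀ a ha))
  refine (tendstoLocallyUniformlyOn_iff_tendsto_prod hGu₀).2 fun a ha => ?_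
  have hsnd : Tendsto (fun q : ι × X => q.2) (p ×ˢ 𝓝[s] a) (𝓝 a) :=
    tendsto_snd.mono_right nhdsWithin_le_nhds
  exact tendsto_comp_of_seqContinuous hG (hsnd.prodMk_nhds (hu a ha))

end ContinuousConvergence

theorem tendstoUniformlyOn_atTop_iff_norm_sub_lt {X E : Type*} [SeminormedAddCommGroup E]
    {f : ℕ → X → E} {g : X → E} {s : Set X} :
    TendstoUniformlyOn f g atTop s ↔
      ∀ ε > 0, ∃ N : ℕ, ∀ n ≥ N, ∀ x ∈ s, ‖f n x - g x‖ < ε := by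
  simp only [Metric.tendstoUniformlyOn_iff, eventually_atTop, dist_eq_norm_sub']

theorem Fop_sequentially_continuous_general {𝕜₁ 𝕜₂ ι X E E' β : Type*}
    [NormedField 𝕜₁] [NormedField 𝕜₂] {σ : 𝕜₁ →+* 𝕜₂}
    [AddCommGroup E] [TopologicalSpace E] [Module 𝕜₁ E]
    [AddCommGroup E'] [UniformSpace E'] [IsUniformAddGroup E'] [Module 𝕜₂ E']
    [TopologicalSpace X] [FirstCountableTopology X] [UniformSpace β]
    {p : Filter ι} [p.IsCountablyGenerated]
    {F : X × (E →SLₚₜ[σ] E') → β} (hF : SeqContinuous F)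
    {Z : ι → X → E →SLₚₜ[σ] E'} {Z₀ : X → E →SLₚₜ[σ] E'} {s : Set X}
    (hZ₀ : ∀ h, ContinuousOn (fun x => Z₀ x h) s)
    (hZ : ∀ h, TendstoLocallyUniformlyOn (fun n x => Z n x h) (fun x => Z₀ x h) p s) :
    TendstoLocallyUniformlyOn (fun n x => F (x, Z n x)) (fun x => F (x, Z₀ x)) p s :=
  tendstoLocallyUniformlyOn_comp_of_seqContinuous hF
    (fun a ha => PointwiseConvergenceCLM.tendsto_iff_forall_tendsto.2 fun h => hZ₀ h a ha)
    fun a ha => PointwiseConvergenceCLM.tendsto_iff_forall_tendsto.2 fun h =>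
      (tendstoLocallyUniformlyOn_iff_tendsto_prod (hZ₀ h)).1 (hZ h) a ha

/-- sequential continuity of the induced operator `F^{op}`: if `F` satisfies the
Lipschitz-type estimate and is sequentially continuous in the Hessian variable for the strong
operator topology, and `Z n → Z` uniformly on compacts applied to compact sets of vectors, then
`F(x, v, p, Z n (x)) → F(x, v, p, Z (x))` uniformly on compact subsets of `H × ℝ × H`. -/
theorem Fop_sequentially_continuous
    {H : Type*} [NormedAddCommGroup H] [InnerProductSpace ℝ H] [CompleteSpace H]
    [SecondCountableTopology H]
    (F : H → ℝ → H → (H →L[ℝ] H) → ℝ)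
    (hFcont : Continuous fun w : H × ℝ × H × (H →L[ℝ] H) => F w.1 w.2.1 w.2.2.1 w.2.2.2)
    (C k : ℝ) (hC : 0 < C) (hk : 0 ≤ k)
    (hLip : ∀ (x : H) (v r : ℝ) (p q : H) (Z Y : H →L[ℝ] H),
      |F x v p Z - F x r q Y| ≤ C * (|v - r| + ‖p - q‖ + ‖Z - Y‖) * (1 + ‖x‖ ^ k))
    (hseq : ∀ (xn : ℕ → H) (x : H) (vn : ℕ → ℝ) (v : ℝ) (pn : ℕ → H) (p : H)
        (Yn : ℕ → H →L[ℝ] H) (Y : H →L[ℝ] H),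
        Tendsto xn atTop (𝓝 x) → Tendsto vn atTop (𝓝 v) → Tendsto pn atTop (𝓝 p) →
        (∀ h : H, Tendsto (fun n => Yn n h) atTop (𝓝 (Y h))) →
        Tendsto (fun n => F (xn n) (vn n) (pn n) (Yn n)) atTop (𝓝 (F x v p Y)))
    (Z : ℕ → H → (H →L[ℝ] H)) (Z₀ : H → (H →L[ℝ] H))
    (hZcont : ∀ n, Continuous (Z n)) (hZ₀cont : Continuous Z₀)
    (hZconv : ∀ (K K' : Set H), IsCompact K → IsCompact K' → ∀ ε > 0,
      ∃ N : ℕ, ∀ n ≥ N, ∀ x ∈ K, ∀ h ∈ K', ‖(Z n x - Z₀ x) h‖ < ε)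
    (𝒦 : Set (H × ℝ × H)) (h𝒦 : IsCompact 𝒦) (ε : ℝ) (hε : 0 < ε) :
    ∃ N : ℕ, ∀ n ≥ N, ∀ w ∈ 𝒦,
      |F w.1 w.2.1 w.2.2 (Z n w.1) - F w.1 w.2.1 w.2.2 (Z₀ w.1)| < ε := by
  have hF : SeqContinuous fun q : (H × ℝ × H) × (H →Lₚₜ[ℝ] H) =>
      F q.1.1 q.1.2.1 q.1.2.2 q.2 := fun _ _ hq =>
    hseq _ _ _ _ _ _ _ _ hq.fst_nhds.fst_nhds hq.fst_nhds.snd_nhds.fst_nhds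
      hq.fst_nhds.snd_nhds.snd_nhds
      (PointwiseConvergenceCLM.tendsto_iff_forall_tendsto.1 hq.snd_nhds)
  have hZ₀ (h : H) : ContinuousOn (fun w : H × ℝ × H => Z₀ w.1 h) 𝒦 := by fun_prop
  have hZ (h : H) : TendstoUniformlyOn (fun n (w : H × ℝ × H) => Z n w.1 h)
      (fun w => Z₀ w.1 h) atTop 𝒦 :=
    tendstoUniformlyOn_atTop_iff_norm_sub_lt.2 fun δ hδ =>
      (hZconv (Prod.fst '' 𝒦) {h} (h𝒦.image continuous_fst) isCompact_singleton δ hδ).imp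
        fun _ hN n hn _ hw => hN n hn _ (Set.mem_image_of_mem _ hw) h rfl
  have hunif := (tendstoLocallyUniformlyOn_iff_tendstoUniformlyOn_of_compact h𝒦).1
    (Fop_sequentially_continuous_general hF hZ₀ fun h => (hZ h).tendstoLocallyUniformlyOn)
  exact tendstoUniformlyOn_atTop_iff_norm_sub_lt.1 hunif ε hε
end
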